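/- Let ε ∈ (0,1), δ ≥ 0, let G be a d-regular simple graph on n vertices (d > 0), and let X = (X₁,…,Xₙ) be a random vector with each Xᵤ taking values in the alphabet {1,2,3} ∪ {⊥}. Suppose: (i) for every edge (u,v) of G and every color σ ∈ {1,2,3}, Pr[Xᵤ = σ ∧ Xᵥ = σ] = 0; (ii) (1/n) Σ_{u∈[n]} Pr[Xᵤ = ⊥] ≤ δ; and (iii) the local correlation bound (1/(n·d)) · Σ_{(u,v): u adjacent to v} Σ_{σ∈{1,2,3}} Pr[Xᵤ = σ]² · Pr[Xᵥ = σ]² ≤ ε/50 holds, where the sum is over ordered pairs of adjacent vertices. Let γ = 1/1000 and for σ ∈ {1,2,3} define S_σ = { u ∈ [n] : Pr[Xᵤ = σ] ≥ 1/2 + γ }. Then S₁, S₂, S₃ are pairwise disjoint independent sets of G and |S₁ ∪ S₂ ∪ S₃| ≥ (1/2 − ε/2 − 1000·δ)·n. In particular, coloring each S_σ with color σ gives a proper partial 3-coloring of at least (1/2 − ε/2 − 1000δ)n vertices. -/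

import Mathlib

/-!
Write `p_u(σ) = Pr[X_u = σ]` and `b_u = Pr[X_u = ⊥]`. Two events that almost surely do not co-occur
cannot both have probability above `1/2`; this makes the sets `S_σ` disjoint and independent.

For their size, call `u` *balanced* if `p_u(σ) < 1/2 + γ` for all `σ` and `b_u < γ`. For balanced
`u` and `v`, the vectors `p_u` and `p_v` lie up to `O(γ)` in the triangle spanned by the
permutations of `(1/2, 1/2, 0)`, any two points of which have inner product at least `1/4`. By
Cauchy–Schwarz, `∑_σ p_u(σ)² p_v(σ)²` is at least about `1/48`. A set `B` of more than half of
the vertices of a `d`-regular graph on `n` vertices spans at least `(2|B| - n) d` ordered edges, so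
low local correlation forces the balanced vertices to be at most about half of all vertices. An
unbalanced vertex lies in some `S_σ` or has `b_u ≥ γ`, and by Markov's inequality the latter
vertices are few.
-/

-- `prEvent w E` is the probability of the event `E` under the finitely supported
-- probability distribution given by the weight function `w`.
open scoped Classical in
noncomputable def prEvent {Ω : Type*} [Fintype Ω] (w : Ω → ℝ) (E : Ω → Prop) : ℝ :=
  ∑ ω ∈ Finset.univ.filter E, w ω

section Probability

variable {Ω : Type*} [Fintype Ω] {w : Ω → ℝ}

lemma prEvent_nonneg (hw : ∀ ω, 0 ≤ w ω) (E : Ω → Prop) : 0 ≤ prEvent w E :=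
  Finset.sum_nonneg fun ω _ => hw ω

lemma prEvent_le_sum (hw : ∀ ω, 0 ≤ w ω) (E : Ω → Prop) : prEvent w E ≤ ∑ ω, w ω :=
  Finset.sum_le_univ_sum_of_nonneg hw

lemma prEvent_or_add_prEvent_and (w : Ω → ℝ) (E F : Ω → Prop) :
    prEvent w (fun ω => E ω ∨ F ω) + prEvent w (fun ω => E ω ∧ F ω) =
      prEvent w E + prEvent w F := by
  simp only [prEvent, Finset.sum_filter, ← Finset.sum_add_distrib]
  refine Finset.sum_congr rfl fun ω _ => ?_
  by_cases hE : E ω <;> by_cases hF : F ω <;> simp [hE, hF]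

lemma prEvent_add_prEvent_le_sum (hw : ∀ ω, 0 ≤ w ω) {E F : Ω → Prop}
    (hEF : prEvent w (fun ω => E ω ∧ F ω) = 0) : prEvent w E + prEvent w F ≤ ∑ ω, w ω := by
  rw [← prEvent_or_add_prEvent_and, hEF, add_zero]
  exact prEvent_le_sum hw _

lemma sum_prEvent_eq {α : Type*} [Fintype α] (w : Ω → ℝ) (Y : Ω → α) :
    ∑ a, prEvent w (fun ω => Y ω = a) = ∑ ω, w ω := by
  classical
  simp only [prEvent]
  exact Finset.sum_fiberwise _ _ _

end Probability

section Inequalities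

lemma mul_card_filter_le_sum {α : Type*} [Fintype α] {f : α → ℝ} (hf : ∀ a, 0 ≤ f a) (t : ℝ) :
    t * (Finset.univ.filter fun a => t ≤ f a).card ≤ ∑ a, f a :=
  calc t * (Finset.univ.filter fun a => t ≤ f a).card
      = ∑ a with t ≤ f a, t := by rw [Finset.sum_const, nsmul_eq_mul, mul_comm]
    _ ≤ ∑ a with t ≤ f a, f a := Finset.sum_le_sum fun a ha => (Finset.mem_filter.1 ha).2
    _ ≤ ∑ a, f a := Finset.sum_le_univ_sum_of_nonneg hf

variable {ι : Type*} [Fintype ι] {p q : ι → ℝ} {h s : ℝ}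

lemma mul_sub_card_mul_le_sum_mul (hh : 0 ≤ h) (hp : ∀ i, p i ≤ h) (hq : ∀ i, q i ≤ h)
    (hps : s ≤ ∑ i, p i) (hqs : s ≤ ∑ i, q i) :
    h * (2 * s - Fintype.card ι * h) ≤ ∑ i, p i * q i := by
  have slack_nonneg : 0 ≤ ∑ i, (h - p i) * (h - q i) :=
    Finset.sum_nonneg fun i _ => mul_nonneg (sub_nonneg.2 (hp i)) (sub_nonneg.2 (hq i))
  have slack_eq : ∑ i, (h - p i) * (h - q i) =
      Fintype.card ι * h ^ 2 - h * (∑ i, p i + ∑ i, q i) + ∑ i, p i * q i :=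
    calc ∑ i, (h - p i) * (h - q i)
        = ∑ i, (h ^ 2 - h * (p i + q i) + p i * q i) := Finset.sum_congr rfl fun i _ => by ring
      _ = _ := by
        simp only [Finset.sum_add_distrib, Finset.sum_sub_distrib, ← Finset.mul_sum,
          Finset.sum_const, Finset.card_univ, nsmul_eq_mul]
  have mass_le : h * (2 * s) ≤ h * (∑ i, p i + ∑ i, q i) := by gcongr; linarith
  linarith

lemma sq_mul_sub_card_mul_le (hh : 0 ≤ h) (hs : Fintype.card ι * h ≤ 2 * s)
    (hp : ∀ i, p i ≤ h) (hq : ∀ i, q i ≤ h) (hps : s ≤ ∑ i, p i) (hqs : s ≤ ∑ i, q i) :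
    (h * (2 * s - Fintype.card ι * h)) ^ 2 ≤ Fintype.card ι * ∑ i, p i ^ 2 * q i ^ 2 :=
  calc (h * (2 * s - Fintype.card ι * h)) ^ 2
      ≤ (∑ i, p i * q i) ^ 2 :=
        pow_le_pow_left₀ (mul_nonneg hh (sub_nonneg.2 hs))
          (mul_sub_card_mul_le_sum_mul hh hp hq hps hqs) 2
    _ ≤ Fintype.card ι * ∑ i, p i ^ 2 * q i ^ 2 := by
        simpa only [mul_pow, Finset.card_univ] using
          sq_sum_le_card_mul_sum_sq (s := Finset.univ) (f := fun i => p i * q i)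

end Inequalities

section RegularGraph

variable {V : Type*} [Fintype V] {G : SimpleGraph V} [DecidableRel G.Adj] {d : ℕ}

lemma sum_sum_neighborFinset_left (hG : G.IsRegularOfDegree d) (g : V → ℝ) :
    ∑ u, ∑ _v ∈ G.neighborFinset u, g u = d * ∑ u, g u := by
  simp only [Finset.sum_const, G.card_neighborFinset_eq_degree, hG.degree_eq, nsmul_eq_mul,
    Finset.mul_sum]

lemma sum_sum_neighborFinset_right (hG : G.IsRegularOfDegree d) (g : V → ℝ) :
    ∑ u, ∑ v ∈ G.neighborFinset u, g v = d * ∑ u, g u := by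
  rw [← sum_sum_neighborFinset_left hG]
  exact Finset.sum_comm' fun u v => by simp [G.adj_comm]

lemma mul_two_mul_card_sub_card_le_sum (hG : G.IsRegularOfDegree d) {f : V → V → ℝ}
    (hf : ∀ u v, 0 ≤ f u v) {c : ℝ} (hc : 0 ≤ c) {B : Finset V}
    (hB : ∀ u ∈ B, ∀ v ∈ B, c ≤ f u v) :
    c * (d * (2 * B.card - Fintype.card V)) ≤ ∑ u, ∑ v, if G.Adj u v then f u v else 0 := by
  classical
  let i : V → ℝ := fun u => if u ∈ B then 1 else 0
  have sum_i : ∑ u, i u = B.card := by simp [i]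
  have le_f (u v : V) : c * (i u + i v - 1) ≤ f u v := by
    by_cases hu : u ∈ B <;> by_cases hv : v ∈ B
    · simpa [i, hu, hv] using hB u hu v hv
    · simpa [i, hu, hv] using hf u v
    · simpa [i, hu, hv] using hf u v
    · simpa [i, hu, hv] using (neg_nonpos.2 hc).trans (hf u v)
  calc c * (d * (2 * B.card - Fintype.card V))
      = ∑ u, ∑ v ∈ G.neighborFinset u, c * (i u + i v - 1) := by
        simp only [← Finset.mul_sum, Finset.sum_sub_distrib, Finset.sum_add_distrib,
          sum_sum_neighborFinset_left hG, sum_sum_neighborFinset_right hG, sum_i]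
        rw [Finset.sum_const, Finset.card_univ, nsmul_one]
        ring
    _ ≤ ∑ u, ∑ v ∈ G.neighborFinset u, f u v :=
        Finset.sum_le_sum fun u _ => Finset.sum_le_sum fun v _ => le_f u v
    _ = ∑ u, ∑ v, if G.Adj u v then f u v else 0 := by
        simp only [G.neighborFinset_eq_filter, Finset.sum_filter]

end RegularGraph

section PartialColoring

variable {V C Ω : Type*} [Fintype Ω]

/-- The law of the color of the vertex `u` in the random partial coloring `X`, as a probability
mass function; `none` stands for "uncolored" (`⊥`). -/
noncomputable def marginal (w : Ω → ℝ) (X : Ω → V → Option C) (u : V) (a : Option C) : ℝ :=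
  prEvent w fun ω => X ω u = a

/-- The set `S_σ` of vertices that receive the color `σ` with probability at least `1 / 2 + γ`. -/
noncomputable def majorityClass [Fintype V] (w : Ω → ℝ) (X : Ω → V → Option C) (γ : ℝ) (σ : C) :
    Finset V :=
  Finset.univ.filter fun u => 1 / 2 + γ ≤ marginal w X u (some σ)

open scoped Classical in
/-- The vertices that are colored with probability above `1 - γ`, but with no color of probability
at least `1 / 2 + γ`. Any two of them are correlated. -/
noncomputable def balancedVertices [Fintype V] (w : Ω → ℝ) (X : Ω → V → Option C) (γ : ℝ) :
    Finset V :=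
  Finset.univ.filter fun u => (∀ σ, marginal w X u (some σ) < 1 / 2 + γ) ∧ marginal w X u none < γ

/-- The lower bound on the correlation `∑ σ, Pr[X_u = σ]² * Pr[X_v = σ]²` of two balanced vertices
`u` and `v` that Cauchy–Schwarz gives for `k` colors. It is `1/48` for `k = 3` and `γ = 0`. -/
noncomputable def balancedCorrelation (k : ℕ) (γ : ℝ) : ℝ :=
  ((1 / 2 + γ) * (2 * (1 - γ) - k * (1 / 2 + γ))) ^ 2 / k

variable {w : Ω → ℝ} {X : Ω → V → Option C} {γ : ℝ}

lemma sum_marginal_some_add_marginal_none [Fintype C] (hw1 : ∑ ω, w ω = 1) (u : V) :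
    ∑ σ, marginal w X u (some σ) + marginal w X u none = 1 := by
  rw [add_comm, ← Fintype.sum_option, ← hw1]
  exact sum_prEvent_eq w fun ω => X ω u

variable [Fintype V]

lemma mem_majorityClass {σ : C} {u : V} :
    u ∈ majorityClass w X γ σ ↔ 1 / 2 + γ ≤ marginal w X u (some σ) := by
  simp only [majorityClass, Finset.mem_filter_univ]

lemma mem_balancedVertices {u : V} : u ∈ balancedVertices w X γ ↔
    (∀ σ, marginal w X u (some σ) < 1 / 2 + γ) ∧ marginal w X u none < γ := by
  simp only [balancedVertices, Finset.mem_filter_univ]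

lemma prEvent_and_ne_zero_of_mem_majorityClass (hw : ∀ ω, 0 ≤ w ω) (hw1 : ∑ ω, w ω = 1)
    (hγ : 0 < γ) {σ τ : C} {u v : V} (hu : u ∈ majorityClass w X γ σ)
    (hv : v ∈ majorityClass w X γ τ) :
    prEvent w (fun ω => X ω u = some σ ∧ X ω v = some τ) ≠ 0 := fun hzero => by
  have hle : marginal w X u (some σ) + marginal w X v (some τ) ≤ 1 :=
    hw1 ▸ prEvent_add_prEvent_le_sum hw hzero
  linarith [mem_majorityClass.1 hu, mem_majorityClass.1 hv]

lemma disjoint_majorityClass (hw : ∀ ω, 0 ≤ w ω) (hw1 : ∑ ω, w ω = 1) (hγ : 0 < γ) {σ τ : C}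
    (hστ : σ ≠ τ) : Disjoint (majorityClass w X γ σ) (majorityClass w X γ τ) := by
  refine Finset.disjoint_left.2 fun u hσ hτ =>
    prEvent_and_ne_zero_of_mem_majorityClass hw hw1 hγ hσ hτ ?_
  have impossible (ω : Ω) : ¬ (X ω u = some σ ∧ X ω u = some τ) := fun ⟨h, h'⟩ =>
    hστ (Option.some_injective _ (h.symm.trans h'))
  simp only [prEvent, impossible, Finset.filter_false, Finset.sum_empty]

lemma isIndepSet_majorityClass {G : SimpleGraph V} (hw : ∀ ω, 0 ≤ w ω) (hw1 : ∑ ω, w ω = 1)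
    (hγ : 0 < γ) {σ : C}
    (hedge : ∀ u v, G.Adj u v → prEvent w (fun ω => X ω u = some σ ∧ X ω v = some σ) = 0) :
    G.IsIndepSet (majorityClass w X γ σ) := fun u hu v hv _ huv =>
  prEvent_and_ne_zero_of_mem_majorityClass hw hw1 hγ hu hv (hedge u v huv)

variable [Fintype C]

lemma balancedCorrelation_le (hw1 : ∑ ω, w ω = 1) (hγ : 0 < γ)
    (hCγ : Fintype.card C * (1 / 2 + γ) ≤ 2 * (1 - γ)) {u v : V}
    (hu : u ∈ balancedVertices w X γ) (hv : v ∈ balancedVertices w X γ) :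
    balancedCorrelation (Fintype.card C) γ ≤
      ∑ σ, marginal w X u (some σ) ^ 2 * marginal w X v (some σ) ^ 2 := by
  have mass_ge {x : V} (hx : x ∈ balancedVertices w X γ) :
      1 - γ ≤ ∑ σ, marginal w X x (some σ) := by
    linarith [sum_marginal_some_add_marginal_none (X := X) hw1 x, (mem_balancedVertices.1 hx).2]
  have entry_le {x : V} (hx : x ∈ balancedVertices w X γ) (σ : C) :
      marginal w X x (some σ) ≤ 1 / 2 + γ := ((mem_balancedVertices.1 hx).1 σ).le
  refine div_le_of_le_mul₀ (Nat.cast_nonneg _) (by positivity) ?_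
  rw [mul_comm (∑ σ, _)]
  exact sq_mul_sub_card_mul_le (by positivity) hCγ (entry_le hu) (entry_le hv) (mass_ge hu)
    (mass_ge hv)

lemma card_balancedVertices_le [Nonempty V] {d : ℕ} (hd : 0 < d) {ε c : ℝ}
    {G : SimpleGraph V} [DecidableRel G.Adj] (hG : G.IsRegularOfDegree d)
    (hw1 : ∑ ω, w ω = 1) (hγ : 0 < γ) (hCγ : Fintype.card C * (1 / 2 + γ) ≤ 2 * (1 - γ))
    (hc : 0 < c) (hcγ : c ≤ balancedCorrelation (Fintype.card C) γ)
    (hlocal : 1 / ((Fintype.card V : ℝ) * d) * ∑ u, ∑ v,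
        (if G.Adj u v then
          ∑ σ, marginal w X u (some σ) ^ 2 * marginal w X v (some σ) ^ 2
        else 0) ≤ ε * c) :
    ((balancedVertices w X γ).card : ℝ) ≤ (1 + ε) / 2 * Fintype.card V := by
  have edge_sum_ge := mul_two_mul_card_sub_card_le_sum hG
    (f := fun u v => ∑ σ, marginal w X u (some σ) ^ 2 * marginal w X v (some σ) ^ 2)
    (fun u v => by positivity) hc.le
    fun u hu v hv => hcγ.trans (balancedCorrelation_le hw1 hγ hCγ hu hv)
  rw [one_div, inv_mul_le_iff₀ (by positivity)] at hlocal
  have scaled : c * d * (2 * (balancedVertices w X γ).card - Fintype.card V) ≤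
      c * d * (ε * Fintype.card V) := by linarith
  linarith [le_of_mul_le_mul_left scaled (by positivity)]

lemma card_le_card_biUnion_majorityClass_add [DecidableEq V] (w : Ω → ℝ) (X : Ω → V → Option C)
    (γ : ℝ) : Fintype.card V ≤ (Finset.univ.biUnion (majorityClass w X γ)).card +
      (balancedVertices w X γ).card +
        (Finset.univ.filter fun u => γ ≤ marginal w X u none).card := by
  have cover : (Finset.univ : Finset V) ⊆ Finset.univ.biUnion (majorityClass w X γ) ∪
      balancedVertices w X γ ∪ Finset.univ.filter fun u => γ ≤ marginal w X u none := by
    intro u _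
    simp only [Finset.mem_union, Finset.mem_biUnion, Finset.mem_univ, true_and,
      mem_majorityClass, mem_balancedVertices, Finset.mem_filter_univ]
    by_contra! hu
    exact hu.2.not_ge (hu.1.2 hu.1.1)
  calc Fintype.card V ≤ _ := Finset.card_le_card cover
    _ ≤ _ := (Finset.card_union_le _ _).trans (by gcongr; exact Finset.card_union_le _ _)

lemma le_card_biUnion_majorityClass [DecidableEq V] {d : ℕ} (hd : 0 < d) {ε δ c : ℝ}
    {G : SimpleGraph V} [DecidableRel G.Adj] (hG : G.IsRegularOfDegree d)
    (hw : ∀ ω, 0 ≤ w ω) (hw1 : ∑ ω, w ω = 1) (hγ : 0 < γ)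
    (hCγ : Fintype.card C * (1 / 2 + γ) ≤ 2 * (1 - γ))
    (hbot : 1 / (Fintype.card V : ℝ) * ∑ u, marginal w X u none ≤ δ)
    (hc : 0 < c) (hcγ : c ≤ balancedCorrelation (Fintype.card C) γ)
    (hlocal : 1 / ((Fintype.card V : ℝ) * d) * ∑ u, ∑ v,
        (if G.Adj u v then
          ∑ σ, marginal w X u (some σ) ^ 2 * marginal w X v (some σ) ^ 2
        else 0) ≤ ε * c) :
    (1 / 2 - ε / 2 - δ / γ) * Fintype.card V ≤
      ((Finset.univ.biUnion (majorityClass w X γ)).card : ℝ) := by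
  cases isEmpty_or_nonempty V
  · simp
  have balanced_le := card_balancedVertices_le hd hG hw1 hγ hCγ hc hcγ hlocal
  have uncolored_le : ((Finset.univ.filter fun u => γ ≤ marginal w X u none).card : ℝ) ≤
      δ / γ * Fintype.card V := by
    rw [one_div, inv_mul_le_iff₀ (by positivity)] at hbot
    rw [div_mul_eq_mul_div, le_div_iff₀' hγ, mul_comm δ]
    exact (mul_card_filter_le_sum (fun u => prEvent_nonneg hw _) γ).trans hbot
  have card_le : (Fintype.card V : ℝ) ≤ _ :=
    Nat.cast_le.2 (card_le_card_biUnion_majorityClass_add w X γ)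
  push_cast at card_le
  linarith

end PartialColoring

theorem coloring_from_low_local_correlation_general
    {V C Ω : Type*} [Fintype V] [DecidableEq V] [Fintype C] [Fintype Ω]
    {d : ℕ} (hd : 0 < d) {ε δ γ c : ℝ} (hγ : 0 < γ)
    (hCγ : Fintype.card C * (1 / 2 + γ) ≤ 2 * (1 - γ))
    {G : SimpleGraph V} [DecidableRel G.Adj] (hG : G.IsRegularOfDegree d)
    {w : Ω → ℝ} (hw : ∀ ω, 0 ≤ w ω) (hw1 : ∑ ω, w ω = 1) {X : Ω → V → Option C}
    (hedge : ∀ u v, G.Adj u v → ∀ σ,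
      prEvent w (fun ω => X ω u = some σ ∧ X ω v = some σ) = 0)
    (hbot : 1 / (Fintype.card V : ℝ) * ∑ u, marginal w X u none ≤ δ)
    (hc : 0 < c) (hcγ : c ≤ balancedCorrelation (Fintype.card C) γ)
    (hlocal : 1 / ((Fintype.card V : ℝ) * d) * ∑ u, ∑ v,
        (if G.Adj u v then
          ∑ σ, marginal w X u (some σ) ^ 2 * marginal w X v (some σ) ^ 2
        else 0) ≤ ε * c) :
    (∀ σ τ, σ ≠ τ → Disjoint (majorityClass w X γ σ) (majorityClass w X γ τ)) ∧
      (∀ σ, G.IsIndepSet (majorityClass w X γ σ)) ∧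
      (1 / 2 - ε / 2 - δ / γ) * Fintype.card V ≤
        ((Finset.univ.biUnion (majorityClass w X γ)).card : ℝ) :=
  ⟨fun _ _ => disjoint_majorityClass hw hw1 hγ,
    fun σ => isIndepSet_majorityClass hw hw1 hγ fun u v huv => hedge u v huv σ,
    le_card_biUnion_majorityClass hd hG hw hw1 hγ hCγ hbot hc hcγ hlocal⟩

lemma one_div_fifty_le_balancedCorrelation : 1 / 50 ≤ balancedCorrelation 3 (1 / 1000) := by
  norm_num [balancedCorrelation]

lemma biUnion_univ_fin_three {α : Type*} [DecidableEq α] (S : Fin 3 → Finset α) :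
    Finset.univ.biUnion S = S 0 ∪ S 1 ∪ S 2 := by
  ext a
  simp [Fin.exists_fin_succ]

open scoped Classical in
/-- **Core of the main 3-coloring theorem.**
Let `G` be a `d`-regular simple graph on `n` vertices and `X = (X₁,…,Xₙ)` a
random vector (given by the weights `w` on a finite sample space `Ω`) with
values in `({1,2,3} ∪ {⊥})ⁿ`, modeled as `Fin n → Option (Fin 3)`. Assume:
(i) no edge is monochromatic in any color: for every edge `(u,v)` and color `σ`,
`Pr[Xᵤ = σ ∧ Xᵥ = σ] = 0`; (ii) `(1/n)·∑ᵤ Pr[Xᵤ = ⊥] ≤ δ`; and (iii) the local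
correlation bound `E_{(u,v)∼G}[∑_σ Pr[Xᵤ = σ]²·Pr[Xᵥ = σ]²] ≤ ε/50`. With
`γ = 1/1000` and `S_σ = {u : Pr[Xᵤ = σ] ≥ 1/2 + γ}`, the sets `S₁, S₂, S₃` are
pairwise disjoint independent sets and `|S₁ ∪ S₂ ∪ S₃| ≥ (1/2 − ε/2 − 1000δ)·n`. -/
theorem coloring_from_low_local_correlation
    {n d : ℕ} (hd : 0 < d) (ε δ : ℝ) (hε : ε ∈ Set.Ioo (0 : ℝ) 1) (hδ : 0 ≤ δ)
    (G : SimpleGraph (Fin n)) [DecidableRel G.Adj] (hreg : G.IsRegularOfDegree d)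
    {Ω : Type*} [Fintype Ω] (w : Ω → ℝ)
    (hw : ∀ ω, 0 ≤ w ω) (hw1 : ∑ ω, w ω = 1)
    (X : Ω → Fin n → Option (Fin 3))
    (hedge : ∀ u v, G.Adj u v → ∀ σ : Fin 3,
      prEvent w (fun ω => X ω u = some σ ∧ X ω v = some σ) = 0)
    (hbot : (1 / (n : ℝ)) * ∑ u, prEvent w (fun ω => X ω u = none) ≤ δ)
    (hlocal : (1 / ((n : ℝ) * d)) * ∑ u, ∑ v,
        (if G.Adj u v then
          ∑ σ : Fin 3, prEvent w (fun ω => X ω u = some σ) ^ 2 *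
            prEvent w (fun ω => X ω v = some σ) ^ 2
        else 0) ≤ ε / 50)
    (S : Fin 3 → Finset (Fin n))
    (hS : ∀ σ : Fin 3, S σ =
      Finset.univ.filter fun u => 1/2 + 1/1000 ≤ prEvent w (fun ω => X ω u = some σ)) :
    (∀ σ τ : Fin 3, σ ≠ τ → Disjoint (S σ) (S τ)) ∧
      (∀ σ : Fin 3, ∀ u ∈ S σ, ∀ v ∈ S σ, ¬ G.Adj u v) ∧
      (1/2 - ε/2 - 1000 * δ) * n ≤ ((S 0 ∪ S 1 ∪ S 2).card : ℝ) := by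
  obtain rfl : S = majorityClass w X (1 / 1000) := funext hS
  obtain ⟨hdisj, hindep, hcard⟩ := coloring_from_low_local_correlation_general (ε := ε) (δ := δ)
    hd (by norm_num) (by norm_num) hreg hw hw1 hedge (by rwa [Fintype.card_fin]) (by norm_num)
    one_div_fifty_le_balancedCorrelation
    (by rwa [Fintype.card_fin n, ← div_eq_mul_one_div])
  rw [biUnion_univ_fin_three, Fintype.card_fin] at hcard
  exact ⟨hdisj, fun σ u hu v hv huv => hindep σ hu hv huv.ne huv, by linarith⟩
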